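/- Let d ≥ 2 be an integer, let C > 0, and let 1 ≤ p ≤ q < r < ∞. Suppose there is a constant c > 0 such that for every measurable E ⊆ Q, every λ ∈ (0,1], and every measurable F ⊆ B(0,C) × ℝ^{d−1} with T[χ_E](ξ,x) ≥ λ for all (ξ,x) ∈ F, one has ℒ^d(E)^{1/p} ≥ c λ ℒ^{2(d−1)}(F)^{1/q} m(F)^{1/r − 1/q}. Then for every ε > 0 there is a constant A > 0 such that ‖T[f]‖_{L^q(L^r),K} ≤ A ‖f‖_{L^{p+ε}(ℝ^d)} for every nonnegative measurable function f supported on Q. -/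

import Mathlib

open MeasureTheory ENNReal

noncomputable section

/-- `ℝ^n` with the Euclidean structure. We model `ℝ^d` as `Euc (d-1) × ℝ`. -/
abbrev Euc (n : ℕ) := EuclideanSpace ℝ (Fin n)

/-- The local x-ray transform: `T[f](ξ,x) = ∫_0^1 f (x + t(ξ + e_d)) dt`. -/
def xrayT {n : ℕ} (f : Euc n × ℝ → ℝ≥0∞) (ξ x : Euc n) : ℝ≥0∞ :=
  ∫⁻ t in Set.Ioc (0:ℝ) 1, f (x + t • ξ, t)

/-- The Kakeya-order mixed norm `‖T[f]‖_{L^q(L^r),K}`. -/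
def kakeyaMixedNorm {n : ℕ} (q r C : ℝ) (f : Euc n × ℝ → ℝ≥0∞) : ℝ≥0∞ :=
  (∫⁻ ξ in Metric.ball (0 : Euc n) C, (∫⁻ x, xrayT f ξ x ^ r) ^ (q / r)) ^ (1 / q)

/-- `‖f‖_{L^p}` for a nonnegative (extended-real-valued) function. -/
def lpNorm {α : Type*} [MeasureSpace α] (p : ℝ) (f : α → ℝ≥0∞) : ℝ≥0∞ :=
  (∫⁻ z, f z ^ p) ^ (1 / p)

/-- The closed unit cube `Q` centered at `(1/2) e_d` with side length `1`. -/
def Qcube (n : ℕ) : Set (Euc n × ℝ) :=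
  {z | (∀ i, z.1 i ∈ Set.Icc (-(1:ℝ)/2) (1/2)) ∧ z.2 ∈ Set.Icc (0:ℝ) 1}

/-- `m(F) = sup_ξ ℒ^{d-1}({x : (ξ,x) ∈ F})`. -/
def mF {n : ℕ} (F : Set (Euc n × Euc n)) : ℝ≥0∞ :=
  ⨆ ξ : Euc n, volume {x : Euc n | (ξ, x) ∈ F}

/-!
For `E ⊆ Q`, split `T[χ_E]` dyadically according to its size `λ`, and split each superlevel set
`{T[χ_E] ≥ λ}` further according to the measure of its `x`-sections. On a piece `F` whose nonempty
sections have comparable measures, the mixed norm of `χ_F` is comparable to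
`|F|^{1/q} m(F)^{1/r - 1/q}`, which is the quantity that the weak-type hypothesis controls by
`λ⁻¹ |E|^{1/p}`. This bound does not decay over the pieces, so it is interpolated with the trivial
bound `m(F)^{1/r} |B(0,C)|^{1/q}`: a small power `θ` of the latter makes both sums geometric and
costs only `|E|^{1/p}` becoming `|E|^{(1-θ)/p}`.

A function `f` with `‖f‖_{p+ε} = N` is dominated by `N χ_Q` plus the sum over `k ≥ 0` of
`2^{k+1} N` times the indicator of `{f > 2^k N}`, a set of measure at most `2^{-k(p+ε)}`. For
small `θ` we have `(p+ε)(1-θ)/p > 1`, and the sum over `k` converges.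
-/

section DyadicLayers

/-- The geometric series `∑ₖ 2^{-ks}`, the total size of dyadic layers that decay at rate `s`. -/
def dyadicSum (s : ℝ) : ℝ≥0∞ := ∑' k : ℕ, ((2⁻¹ : ℝ≥0∞) ^ k) ^ s

lemma dyadicSum_ne_top {s : ℝ} (hs : 0 < s) : dyadicSum s ≠ ∞ := by
  have h_geom (k : ℕ) : ((2⁻¹ : ℝ≥0∞) ^ k) ^ s = ((2⁻¹ : ℝ≥0∞) ^ s) ^ k := by
    rw [← ENNReal.rpow_natCast_mul, ← ENNReal.rpow_mul_natCast, mul_comm]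
  simp only [dyadicSum, h_geom, ENNReal.tsum_geometric, ne_eq, ENNReal.inv_eq_top,
    tsub_eq_zero_iff_le, not_le]
  exact ENNReal.rpow_lt_one (by simp) hs

lemma two_pow_mul_inv_two_pow (k : ℕ) : (2 : ℝ≥0∞) ^ k * 2⁻¹ ^ k = 1 := by
  rw [← mul_pow, ENNReal.mul_inv_cancel (by simp) (by simp), one_pow]

lemma two_mul_inv_two_pow_succ (k : ℕ) : 2 * (2⁻¹ : ℝ≥0∞) ^ (k + 1) = 2⁻¹ ^ k := by
  rw [pow_succ', ← mul_assoc, ENNReal.mul_inv_cancel (by simp) (by simp), one_mul]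

lemma exists_mul_inv_two_pow_lt_le {y M : ℝ≥0∞} (hy : y ≠ 0) (hyM : y ≤ M) (hM : M ≠ ∞) :
    ∃ k : ℕ, M * 2⁻¹ ^ (k + 1) < y ∧ y ≤ M * 2⁻¹ ^ k := by
  have h_lim : Filter.Tendsto (fun k : ℕ => M * (2⁻¹ : ℝ≥0∞) ^ k) Filter.atTop (nhds (M * 0)) :=
    ENNReal.Tendsto.const_mul
      (ENNReal.tendsto_pow_atTop_nhds_zero_of_lt_one (by simp)) (Or.inr hM)
  rw [mul_zero] at h_lim
  have h_exists : ∃ k : ℕ, M * (2⁻¹ : ℝ≥0∞) ^ (k + 1) < y :=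
    ((h_lim.comp (Filter.tendsto_add_atTop_nat 1)).eventually
      (gt_mem_nhds (pos_iff_ne_zero.2 hy))).exists
  classical
  refine ⟨Nat.find h_exists, Nat.find_spec h_exists, ?_⟩
  rcases h : Nat.find h_exists with _ | k
  · simpa using hyM
  · exact not_lt.1 (Nat.find_min h_exists (m := k) (by lia))

lemma le_add_tsum_ite_mul_two_pow (y : ℝ≥0∞) {N : ℝ≥0∞} (hN : N ≠ 0) :
    y ≤ N + ∑' k : ℕ, if N * 2 ^ k < y then N * 2 ^ (k + 1) else 0 := by
  set S := N + ∑' k : ℕ, if N * 2 ^ k < y then N * 2 ^ (k + 1) else 0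
  have h_min (k : ℕ) : min y (N * 2 ^ k) ≤ S := by
    induction k with
    | zero => simp [S]
    | succ k ih =>
      by_cases hk : N * 2 ^ k < y
      · calc min y (N * 2 ^ (k + 1)) ≤ if N * 2 ^ k < y then N * 2 ^ (k + 1) else 0 := by simp [hk]
          _ ≤ ∑' k : ℕ, if N * 2 ^ k < y then N * 2 ^ (k + 1) else 0 := ENNReal.le_tsum k
          _ ≤ S := le_add_self
      · rw [not_lt] at hk
        exact (min_le_left _ _).trans (by rwa [min_eq_left hk] at ih)
  by_cases hS : S = ∞
  · simp [hS]
  have h_lim : Filter.Tendsto (fun k : ℕ => N * (2 : ℝ≥0∞) ^ k) Filter.atTop (nhds (N * ∞)) :=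
    ENNReal.Tendsto.const_mul (ENNReal.tendsto_pow_atTop_nhds_top_iff.2 (by simp)) (by simp)
  rw [ENNReal.mul_top hN] at h_lim
  obtain ⟨k, hk⟩ := (h_lim.eventually (lt_mem_nhds (lt_top_iff_ne_top.2 hS))).exists
  exact (min_le_iff.1 (h_min k)).resolve_right (not_le.2 hk)

end DyadicLayers

section ENNRealPowers

lemma ennreal_rpow_le_rpow_of_nonpos {a b : ℝ≥0∞} {e : ℝ} (he : e ≤ 0) (hab : a ≤ b) :
    b ^ e ≤ a ^ e := by
  rw [← neg_neg e, ENNReal.rpow_neg b, ENNReal.rpow_neg a, ENNReal.inv_le_inv]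
  exact ENNReal.rpow_le_rpow hab (by linarith)

lemma le_rpow_mul_rpow_one_sub {a x y : ℝ≥0∞} {θ : ℝ} (hθ₀ : 0 ≤ θ) (hθ₁ : θ ≤ 1)
    (hx : a ≤ x) (hy : a ≤ y) : a ≤ x ^ θ * y ^ (1 - θ) := by
  have hθ₁' : 0 ≤ 1 - θ := by linarith
  calc a = a ^ (θ + (1 - θ)) := by simp
    _ = a ^ θ * a ^ (1 - θ) := ENNReal.rpow_add_of_nonneg _ _ hθ₀ hθ₁'
    _ ≤ x ^ θ * y ^ (1 - θ) := by gcongr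

lemma mul_inv_rpow_one_sub {a : ℝ≥0∞} (ha₀ : a ≠ 0) (ha : a ≠ ∞) (θ : ℝ) :
    a * a⁻¹ ^ (1 - θ) = a ^ θ := by
  rw [ENNReal.inv_rpow, ← ENNReal.rpow_neg]
  nth_rw 1 [← ENNReal.rpow_one a]
  rw [← ENNReal.rpow_add _ _ ha₀ ha]
  ring_nf

lemma le_mul_of_forall_lt_le_mul {a b l : ℝ≥0∞} (hb₀ : b ≠ 0) (hb : b ≠ ∞)
    (h : ∀ n, l < n → n ≠ ∞ → a ≤ b * n) : a ≤ b * l := by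
  rw [← ENNReal.div_le_iff' hb₀ hb]
  refine le_of_forall_gt_imp_ge_of_dense fun n hn => ?_
  by_cases hn_top : n = ∞
  · simp [hn_top]
  · exact (ENNReal.div_le_iff' hb₀ hb).2 (h n hn hn_top)

end ENNRealPowers

/-- A monotone, countably subadditive and positively homogeneous functional on nonnegative
functions, such as an `L^p` norm, a mixed norm, or such a norm composed with a positive linear
operator. Monotonicity is required of all functions, the other two laws only of measurable ones. -/
structure IsCountablySublinear {α : Type*} [MeasurableSpace α] (Φ : (α → ℝ≥0∞) → ℝ≥0∞) :
    Prop where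
  mono : ∀ {f g : α → ℝ≥0∞}, (∀ z, f z ≤ g z) → Φ f ≤ Φ g
  tsum_le : ∀ {f : ℕ → α → ℝ≥0∞}, (∀ k, Measurable (f k)) →
    Φ (fun z => ∑' k, f k z) ≤ ∑' k, Φ (f k)
  const_mul_le : ∀ (a : ℝ≥0∞) {f : α → ℝ≥0∞}, Measurable f → Φ (fun z => a * f z) ≤ a * Φ f

section Sublinear

variable {α : Type*} [MeasurableSpace α] {μ : Measure α} {Φ : (α → ℝ≥0∞) → ℝ≥0∞}

lemma IsCountablySublinear.le_tsum_const_mul (hΦ : IsCountablySublinear Φ) {f : α → ℝ≥0∞}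
    {a : ℕ → ℝ≥0∞} {g : ℕ → α → ℝ≥0∞} (hg : ∀ k, Measurable (g k))
    (hfg : ∀ z, f z ≤ ∑' k, a k * g k z) :
    Φ f ≤ ∑' k, a k * Φ (g k) :=
  calc Φ f ≤ Φ (fun z => ∑' k, a k * g k z) := hΦ.mono hfg
    _ ≤ ∑' k, Φ (fun z => a k * g k z) := hΦ.tsum_le fun k => (hg k).const_mul _
    _ ≤ ∑' k, a k * Φ (g k) := ENNReal.tsum_le_tsum fun k => hΦ.const_mul_le _ (hg k)

lemma eLpNorm'_tsum_le {r : ℝ} (hr : 1 ≤ r) {f : ℕ → α → ℝ≥0∞} (hf : ∀ k, Measurable (f k)) :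
    eLpNorm' (fun z => ∑' k, f k z) r μ ≤ ∑' k, eLpNorm' (f k) r μ := by
  have hr₀ : 0 < r := by linarith
  have h_sum_meas (n : ℕ) : Measurable (∑ k ∈ Finset.range n, f k) := by
    rw [Finset.sum_fn]
    exact Finset.measurable_sum _ fun k _ => hf k
  have h_iSup : eLpNorm' (fun z => ∑' k, f k z) r μ =
      ⨆ n : ℕ, eLpNorm' (∑ k ∈ Finset.range n, f k) r μ := by
    have h_rpow_iSup {s : ℝ} (hs : 0 < s) (u : ℕ → ℝ≥0∞) : (⨆ n, u n) ^ s = ⨆ n, u n ^ s :=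
      (ENNReal.orderIsoRpow s hs).map_iSup u
    simp only [eLpNorm', enorm_eq_self, ENNReal.tsum_eq_iSup_nat, h_rpow_iSup hr₀,
      ← h_rpow_iSup (one_div_pos.2 hr₀), ← Finset.sum_apply]
    rw [lintegral_iSup (fun n => (h_sum_meas n).pow_const r)]
    intro m n hmn z
    simp only [Finset.sum_apply]
    gcongr
  rw [h_iSup]
  exact iSup_le fun n =>
    (eLpNorm'_sum_le (fun k _ => (hf k).aestronglyMeasurable) hr).trans (ENNReal.sum_le_tsum _)

lemma eLpNorm'_const_mul {r : ℝ} (hr : 0 < r) (a : ℝ≥0∞) {f : α → ℝ≥0∞} (hf : Measurable f) :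
    eLpNorm' (fun z => a * f z) r μ = a * eLpNorm' f r μ := by
  simp only [eLpNorm', enorm_eq_self, ENNReal.mul_rpow_of_nonneg _ _ hr.le]
  rw [lintegral_const_mul _ (hf.pow_const r), ENNReal.mul_rpow_of_nonneg _ _ (by positivity),
    ← ENNReal.rpow_mul, mul_one_div_cancel hr.ne', ENNReal.rpow_one]

lemma isCountablySublinear_eLpNorm' {r : ℝ} (hr : 1 ≤ r) :
    IsCountablySublinear fun f : α → ℝ≥0∞ => eLpNorm' f r μ where
  mono h := eLpNorm'_mono_enorm_ae (by linarith) (Filter.Eventually.of_forall h)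
  tsum_le := eLpNorm'_tsum_le hr
  const_mul_le a _ hf := (eLpNorm'_const_mul (by linarith) a hf).le

lemma eLpNorm'_indicator_one {r : ℝ} (hr : 0 < r) {s : Set α} (hs : MeasurableSet s) :
    eLpNorm' (s.indicator (1 : α → ℝ≥0∞)) r μ = μ s ^ (1 / r) := by
  have h_rpow (z : α) : s.indicator (1 : α → ℝ≥0∞) z ^ r = s.indicator 1 z := by
    by_cases hz : z ∈ s <;> simp [hz, hr]
  simp only [eLpNorm', enorm_eq_self, h_rpow, lintegral_indicator_one hs]

end Sublinear

section Superlevel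

variable {α : Type*} {Q : Set α} {f : α → ℝ≥0∞} {N : ℝ≥0∞}

/-- The sets `Q, {f > N}, {f > 2N}, {f > 4N}, …`; with the weights `N, 2N, 4N, 8N, …` their
indicators dominate any `f` that vanishes off `Q`. -/
def dyadicSuperlevel (Q : Set α) (f : α → ℝ≥0∞) (N : ℝ≥0∞) : ℕ → Set α
  | 0 => Q
  | k + 1 => {z | N * 2 ^ k < f z}

lemma dyadicSuperlevel_subset (hfQ : ∀ z, z ∉ Q → f z = 0) : ∀ k, dyadicSuperlevel Q f N k ⊆ Q
  | 0 => subset_rfl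
  | _ + 1 => fun z hz => by_contra fun hzQ => by simp [dyadicSuperlevel, hfQ z hzQ] at hz

lemma le_tsum_mul_indicator_dyadicSuperlevel (hfQ : ∀ z, z ∉ Q → f z = 0) (hN : N ≠ 0) (z : α) :
    f z ≤ ∑' k, N * 2 ^ k * (dyadicSuperlevel Q f N k).indicator 1 z := by
  by_cases hz : z ∈ Q
  · rw [tsum_eq_zero_add' ENNReal.summable]
    simpa [dyadicSuperlevel, Set.indicator_apply, hz] using le_add_tsum_ite_mul_two_pow (f z) hN
  · simp [hfQ z hz]

variable [MeasurableSpace α] {μ : Measure α}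

lemma measurableSet_dyadicSuperlevel (hQ : MeasurableSet Q) (hf : Measurable f) :
    ∀ k, MeasurableSet (dyadicSuperlevel Q f N k)
  | 0 => hQ
  | _ + 1 => measurableSet_lt measurable_const hf

lemma measure_dyadicSuperlevel_succ_le (hf : Measurable f) {P : ℝ} (hP : 0 < P) (hN₀ : N ≠ 0)
    (hN : N ≠ ∞) (hfN : eLpNorm' f P μ ≤ N) (k : ℕ) :
    μ (dyadicSuperlevel Q f N (k + 1)) ≤ (2⁻¹ ^ k) ^ P := by
  have h_pow₀ : (N * 2 ^ k) ^ P ≠ 0 := by simp [hN₀, hP.le]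
  have h_pow : (N * 2 ^ k) ^ P ≠ ∞ :=
    ENNReal.rpow_ne_top_of_nonneg hP.le (ENNReal.mul_ne_top hN (by simp))
  calc μ (dyadicSuperlevel Q f N (k + 1))
      ≤ μ {z | (N * 2 ^ k) ^ P ≤ f z ^ P} :=
        measure_mono fun z hz => ENNReal.rpow_le_rpow (le_of_lt hz) hP.le
    _ ≤ (∫⁻ z, f z ^ P ∂μ) / (N * 2 ^ k) ^ P :=
        meas_ge_le_lintegral_div (hf.pow_const P).aemeasurable h_pow₀ h_pow
    _ = eLpNorm' f P μ ^ P / (N * 2 ^ k) ^ P := by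
        rw [← lintegral_rpow_enorm_eq_rpow_eLpNorm' hP]
        simp only [enorm_eq_self]
    _ ≤ N ^ P / (N * 2 ^ k) ^ P := by gcongr
    _ = (2⁻¹ ^ k) ^ P := by
        rw [← ENNReal.div_rpow_of_nonneg _ _ hP.le, ← ENNReal.inv_pow]
        congr 1
        simpa using ENNReal.mul_div_mul_left 1 (2 ^ k) hN₀ hN

end Superlevel

section RestrictedStrongType

variable {α : Type*} [MeasurableSpace α] {μ : Measure α} {Φ : (α → ℝ≥0∞) → ℝ≥0∞}
  {Q : Set α} {A : ℝ≥0∞} {s P : ℝ}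

lemma IsCountablySublinear.le_mul_of_eLpNorm'_le (hΦ : IsCountablySublinear Φ)
    (hQ : MeasurableSet Q) (hP : 0 < P) (hPs : 1 < P * s)
    (hA : ∀ E ⊆ Q, MeasurableSet E → Φ (E.indicator 1) ≤ A * μ E ^ s)
    {f : α → ℝ≥0∞} (hf : Measurable f) (hfQ : ∀ z, z ∉ Q → f z = 0)
    {N : ℝ≥0∞} (hN₀ : N ≠ 0) (hN : N ≠ ∞) (hfN : eLpNorm' f P μ ≤ N) :
    Φ f ≤ A * (μ Q ^ s + 2 * dyadicSum (P * s - 1)) * N := by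
  have hs : 0 ≤ s := (pos_of_mul_pos_right (by linarith) hP.le).le
  set E := dyadicSuperlevel Q f N
  have hE (k : ℕ) : MeasurableSet (E k) := measurableSet_dyadicSuperlevel hQ hf k
  have h_weight (k : ℕ) : N * 2 ^ (k + 1) * (A * μ (E (k + 1)) ^ s) ≤
      A * N * 2 * (2⁻¹ ^ k) ^ (P * s - 1) :=
    calc N * 2 ^ (k + 1) * (A * μ (E (k + 1)) ^ s)
        ≤ N * 2 ^ (k + 1) * (A * ((2⁻¹ ^ k) ^ P) ^ s) := by
          gcongr
          exact measure_dyadicSuperlevel_succ_le hf hP hN₀ hN hfN k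
      _ = N * 2 ^ (k + 1) * (A * (2⁻¹ ^ k * (2⁻¹ ^ k) ^ (P * s - 1))) := by
          rw [← ENNReal.rpow_mul, ← add_sub_cancel 1 (P * s),
            ENNReal.rpow_add_of_nonneg _ _ zero_le_one (by linarith), ENNReal.rpow_one,
            add_sub_cancel]
      _ = A * N * 2 * (2⁻¹ ^ k) ^ (P * s - 1) * (2 ^ k * 2⁻¹ ^ k) := by
          rw [pow_succ]
          ring
      _ = A * N * 2 * (2⁻¹ ^ k) ^ (P * s - 1) := by rw [two_pow_mul_inv_two_pow, mul_one]
  calc Φ f ≤ ∑' k, N * 2 ^ k * Φ ((E k).indicator 1) :=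
        hΦ.le_tsum_const_mul (fun k => measurable_one.indicator (hE k))
          (le_tsum_mul_indicator_dyadicSuperlevel hfQ hN₀)
    _ ≤ ∑' k, N * 2 ^ k * (A * μ (E k) ^ s) := by
        gcongr with k
        exact hA _ (dyadicSuperlevel_subset hfQ k) (hE k)
    _ = N * (A * μ Q ^ s) + ∑' k, N * 2 ^ (k + 1) * (A * μ (E (k + 1)) ^ s) := by
        rw [tsum_eq_zero_add' ENNReal.summable]
        simp [E, dyadicSuperlevel]
    _ ≤ N * (A * μ Q ^ s) + ∑' k, A * N * 2 * (2⁻¹ ^ k) ^ (P * s - 1) :=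
        add_le_add le_rfl (ENNReal.tsum_le_tsum h_weight)
    _ = A * (μ Q ^ s + 2 * dyadicSum (P * s - 1)) * N := by
        rw [ENNReal.tsum_mul_left, dyadicSum]
        ring

theorem IsCountablySublinear.exists_le_mul_eLpNorm' (hΦ : IsCountablySublinear Φ)
    (hQ : MeasurableSet Q) (hμQ : μ Q ≠ ∞) (hP : 0 < P) (hPs : 1 < P * s) (hA_top : A ≠ ∞)
    (hA : ∀ E ⊆ Q, MeasurableSet E → Φ (E.indicator 1) ≤ A * μ E ^ s) :
    ∃ B : ℝ, 0 < B ∧ ∀ f : α → ℝ≥0∞, Measurable f → (∀ z, z ∉ Q → f z = 0) →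
      Φ f ≤ ENNReal.ofReal B * eLpNorm' f P μ := by
  have hs : 0 ≤ s := (pos_of_mul_pos_right (by linarith) hP.le).le
  set K := A * (μ Q ^ s + 2 * dyadicSum (P * s - 1))
  have hK : K ≠ ∞ := ENNReal.mul_ne_top hA_top (ENNReal.add_ne_top.2
    ⟨ENNReal.rpow_ne_top_of_nonneg hs hμQ,
      ENNReal.mul_ne_top (by simp) (dyadicSum_ne_top (by linarith))⟩)
  have hK_le : K ≤ ENNReal.ofReal (K.toReal + 1) :=
    (ENNReal.ofReal_toReal hK).symm.trans_le (ENNReal.ofReal_le_ofReal (by linarith))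
  have hB : 0 < K.toReal + 1 := by positivity
  refine ⟨K.toReal + 1, hB, fun f hf hfQ => ?_⟩
  refine le_mul_of_forall_lt_le_mul (by simpa using hB) (by simp) fun N hfN hN => ?_
  calc Φ f ≤ K * N := hΦ.le_mul_of_eLpNorm'_le hQ hP hPs hA hf hfQ hfN.ne_bot hN hfN.le
    _ ≤ ENNReal.ofReal (K.toReal + 1) * N := by gcongr

end RestrictedStrongType

section MixedNorm

variable {Ω X : Type*} [MeasurableSpace Ω] [MeasurableSpace X] {μ : Measure Ω} {ν : Measure X}
  {q r : ℝ}

/-- The norm of `L^q(L^r)` on a product: the inner `L^r` norm is taken in the second variable. -/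
def mixedNorm (μ : Measure Ω) (ν : Measure X) (q r : ℝ) (h : Ω × X → ℝ≥0∞) : ℝ≥0∞ :=
  eLpNorm' (fun ξ => eLpNorm' (fun x => h (ξ, x)) r ν) q μ

/-- The supremum of the measures of the vertical sections of `F`, an abstract form of `mF`. -/
def maxSection (ν : Measure X) (F : Set (Ω × X)) : ℝ≥0∞ := ⨆ ξ, ν (Prod.mk ξ ⁻¹' F)

/-- The right-hand side of the weak-type estimate. It is the mixed norm of the indicator of `F`
when all sections of `F` that are not null have the same measure. -/
def uniformSize (μ : Measure Ω) (ν : Measure X) (q r : ℝ) (F : Set (Ω × X)) : ℝ≥0∞ :=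
  μ.prod ν F ^ (1 / q) * maxSection ν F ^ (1 / r - 1 / q)

lemma measurable_eLpNorm'_section [SFinite ν] {h : Ω × X → ℝ≥0∞} (hh : Measurable h) :
    Measurable fun ξ => eLpNorm' (fun x => h (ξ, x)) r ν := by
  simp only [eLpNorm', enorm_eq_self]
  exact (hh.pow_const r).lintegral_prod_right'.pow_const _

lemma mixedNorm_mono_ae (hq : 0 ≤ q) (hr : 0 ≤ r) {g h : Ω × X → ℝ≥0∞}
    (hgh : ∀ᵐ ξ ∂μ, ∀ x, g (ξ, x) ≤ h (ξ, x)) : mixedNorm μ ν q r g ≤ mixedNorm μ ν q r h :=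
  eLpNorm'_mono_enorm_ae hq <| hgh.mono fun _ hξ =>
    eLpNorm'_mono_enorm_ae hr (Filter.Eventually.of_forall hξ)

lemma isCountablySublinear_mixedNorm [SFinite ν] (hq : 1 ≤ q) (hr : 1 ≤ r) :
    IsCountablySublinear (mixedNorm μ ν q r) where
  mono h := mixedNorm_mono_ae (by linarith) (by linarith)
    (Filter.Eventually.of_forall fun _ _ => h _)
  tsum_le hf := ((isCountablySublinear_eLpNorm' hq).mono fun ξ =>
      eLpNorm'_tsum_le hr fun k => (hf k).comp measurable_prodMk_left).trans
    (eLpNorm'_tsum_le hq fun k => measurable_eLpNorm'_section (hf k))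
  const_mul_le a _ hf := ((isCountablySublinear_eLpNorm' hq).mono fun ξ =>
      (eLpNorm'_const_mul (by linarith) a (hf.comp measurable_prodMk_left)).le).trans
    (eLpNorm'_const_mul (by linarith) a (measurable_eLpNorm'_section hf)).le

lemma mixedNorm_indicator_one (hr : 0 < r) {F : Set (Ω × X)} (hF : MeasurableSet F) :
    mixedNorm μ ν q r (F.indicator 1) =
      eLpNorm' (fun ξ => ν (Prod.mk ξ ⁻¹' F) ^ (1 / r)) q μ := by
  unfold mixedNorm
  congr 1
  ext ξ
  exact eLpNorm'_indicator_one hr (measurable_prodMk_left hF)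

lemma mixedNorm_indicator_one_le_of_section_le (hq : 0 < q) (hr : 0 < r) {F : Set (Ω × X)}
    (hF : MeasurableSet F) {s : ℝ≥0∞} (hs : ∀ ξ, ν (Prod.mk ξ ⁻¹' F) ≤ s) :
    mixedNorm μ ν q r (F.indicator 1) ≤ s ^ (1 / r) * μ Set.univ ^ (1 / q) := by
  rw [mixedNorm_indicator_one hr hF]
  calc eLpNorm' (fun ξ => ν (Prod.mk ξ ⁻¹' F) ^ (1 / r)) q μ
      ≤ eLpNorm' (fun _ => s ^ (1 / r)) q μ := by
        refine eLpNorm'_mono_enorm_ae hq.le (Filter.Eventually.of_forall fun ξ => ?_)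
        exact ENNReal.rpow_le_rpow (hs ξ) (by positivity)
    _ = s ^ (1 / r) * μ Set.univ ^ (1 / q) := by rw [eLpNorm'_const _ hq, enorm_eq_self]

lemma rpow_div_le_rpow_sub_one_mul {v t : ℝ≥0∞} (hq : 0 < q) (hqr : q ≤ r) (hv : v ≠ ∞)
    (htv : v = 0 ∨ t ≤ v) : v ^ (q / r) ≤ t ^ (q / r - 1) * v := by
  have hr : 0 < r := hq.trans_le hqr
  rcases eq_or_ne v 0 with rfl | hv₀
  · simp [ENNReal.zero_rpow_of_pos (div_pos hq hr)]
  · have he : q / r - 1 ≤ 0 := by linarith [(div_le_one hr).2 hqr]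
    calc v ^ (q / r) = v ^ (q / r - 1) * v := by
          nth_rw 3 [← ENNReal.rpow_one v]
          rw [← ENNReal.rpow_add _ _ hv₀ hv, sub_add_cancel]
      _ ≤ t ^ (q / r - 1) * v := by
          gcongr ?_ * v
          exact ennreal_rpow_le_rpow_of_nonpos he (htv.resolve_left hv₀)

lemma mixedNorm_indicator_one_le_mul_uniformSize [SFinite ν] (hq : 0 < q) (hqr : q ≤ r)
    {F : Set (Ω × X)} (hF : MeasurableSet F) {a : ℝ≥0∞} (ha₀ : a ≠ 0) (ha : a ≠ ∞)
    (hF_top : maxSection ν F ≠ ∞)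
    (hFa : ∀ ξ, ν (Prod.mk ξ ⁻¹' F) = 0 ∨ maxSection ν F ≤ a * ν (Prod.mk ξ ⁻¹' F)) :
    mixedNorm μ ν q r (F.indicator 1) ≤ a ^ (1 / q - 1 / r) * uniformSize μ ν q r F := by
  have hr : 0 < r := hq.trans_le hqr
  set v : Ω → ℝ≥0∞ := fun ξ => ν (Prod.mk ξ ⁻¹' F)
  set t := a⁻¹ * maxSection ν F with ht
  have h_section (ξ : Ω) : v ξ ^ (q / r) ≤ t ^ (q / r - 1) * v ξ := by
    refine rpow_div_le_rpow_sub_one_mul hq hqr (ne_top_of_le_ne_top hF_top (le_iSup v ξ)) ?_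
    refine (hFa ξ).imp_right fun h => ?_
    rwa [ht, mul_comm, ← div_eq_mul_inv, ENNReal.div_le_iff' ha₀ ha]
  calc mixedNorm μ ν q r (F.indicator 1)
      = (∫⁻ ξ, v ξ ^ (q / r) ∂μ) ^ (1 / q) := by
        simp only [mixedNorm_indicator_one hr hF, eLpNorm', enorm_eq_self, ← ENNReal.rpow_mul,
          one_div_mul_eq_div, v]
    _ ≤ (t ^ (q / r - 1) * μ.prod ν F) ^ (1 / q) := by
        rw [Measure.prod_apply hF, ← lintegral_const_mul _ (measurable_measure_prodMk_left hF)]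
        gcongr with ξ
        exact h_section ξ
    _ = t ^ (1 / r - 1 / q) * μ.prod ν F ^ (1 / q) := by
        rw [ENNReal.mul_rpow_of_nonneg _ _ (by positivity), ← ENNReal.rpow_mul]
        congr 2
        field_simp
    _ = a ^ (1 / q - 1 / r) * uniformSize μ ν q r F := by
        rw [ht, ENNReal.mul_rpow_of_ne_top (by simpa using ha₀) hF_top, ENNReal.inv_rpow,
          ← ENNReal.rpow_neg, neg_sub, uniformSize]
        ring

end MixedNorm

section SectionLayers

variable {Ω X : Type*} [MeasurableSpace X] {ν : Measure X} {S : Set (Ω × X)} {M : ℝ≥0∞}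

/-- The part of `S` lying over the points whose section has measure in `(2^{-l-1}M, 2^{-l}M]`. -/
def sectionLayer (ν : Measure X) (S : Set (Ω × X)) (M : ℝ≥0∞) (l : ℕ) : Set (Ω × X) :=
  {w ∈ S | M * 2⁻¹ ^ (l + 1) < ν (Prod.mk w.1 ⁻¹' S) ∧ ν (Prod.mk w.1 ⁻¹' S) ≤ M * 2⁻¹ ^ l}

lemma sectionLayer_subset (l : ℕ) : sectionLayer ν S M l ⊆ S := Set.sep_subset _ _

lemma measurableSet_sectionLayer [MeasurableSpace Ω] [SFinite ν] (hS : MeasurableSet S) (l : ℕ) :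
    MeasurableSet (sectionLayer ν S M l) := by
  have h_meas : Measurable fun w : Ω × X => ν (Prod.mk w.1 ⁻¹' S) :=
    (measurable_measure_prodMk_left hS).comp measurable_fst
  exact hS.inter ((measurableSet_lt measurable_const h_meas).inter
    (measurableSet_le h_meas measurable_const))

lemma preimage_sectionLayer_eq_self {ξ : Ω} {l : ℕ}
    (h : M * 2⁻¹ ^ (l + 1) < ν (Prod.mk ξ ⁻¹' S) ∧ ν (Prod.mk ξ ⁻¹' S) ≤ M * 2⁻¹ ^ l) :
    Prod.mk ξ ⁻¹' sectionLayer ν S M l = Prod.mk ξ ⁻¹' S :=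
  Set.ext fun _ => and_iff_left h

lemma measure_preimage_sectionLayer_mem_Ioc (ξ : Ω) (l : ℕ) :
    ν (Prod.mk ξ ⁻¹' sectionLayer ν S M l) = 0 ∨
      ν (Prod.mk ξ ⁻¹' sectionLayer ν S M l) ∈ Set.Ioc (M * 2⁻¹ ^ (l + 1)) (M * 2⁻¹ ^ l) := by
  by_cases h : M * 2⁻¹ ^ (l + 1) < ν (Prod.mk ξ ⁻¹' S) ∧ ν (Prod.mk ξ ⁻¹' S) ≤ M * 2⁻¹ ^ l
  · exact Or.inr (by rwa [preimage_sectionLayer_eq_self h])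
  · have h_empty : Prod.mk ξ ⁻¹' sectionLayer ν S M l = ∅ :=
      Set.eq_empty_of_forall_notMem fun _ hx => h hx.2
    exact Or.inl (by rw [h_empty, measure_empty])

lemma measure_preimage_sectionLayer_le (ξ : Ω) (l : ℕ) :
    ν (Prod.mk ξ ⁻¹' sectionLayer ν S M l) ≤ M * 2⁻¹ ^ l :=
  (measure_preimage_sectionLayer_mem_Ioc ξ l).elim (fun h => h.trans_le zero_le) And.right

lemma maxSection_sectionLayer_le (l : ℕ) : maxSection ν (sectionLayer ν S M l) ≤ M * 2⁻¹ ^ l :=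
  iSup_le fun ξ => measure_preimage_sectionLayer_le ξ l

lemma maxSection_sectionLayer_le_two_mul (ξ : Ω) (l : ℕ) :
    ν (Prod.mk ξ ⁻¹' sectionLayer ν S M l) = 0 ∨
      maxSection ν (sectionLayer ν S M l) ≤ 2 * ν (Prod.mk ξ ⁻¹' sectionLayer ν S M l) := by
  refine (measure_preimage_sectionLayer_mem_Ioc ξ l).imp_right fun h => ?_
  calc maxSection ν (sectionLayer ν S M l) ≤ M * 2⁻¹ ^ l := maxSection_sectionLayer_le l
    _ = 2 * (M * 2⁻¹ ^ (l + 1)) := by rw [← two_mul_inv_two_pow_succ, mul_left_comm]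
    _ ≤ 2 * ν (Prod.mk ξ ⁻¹' sectionLayer ν S M l) := mul_le_mul_right h.1.le 2

lemma ae_exists_preimage_sectionLayer_eq_self [MeasurableSpace Ω] {μ : Measure Ω} (hM : M ≠ ∞)
    (hSM : ∀ᵐ ξ ∂μ, ν (Prod.mk ξ ⁻¹' S) ≤ M) :
    ∀ᵐ ξ ∂μ, ν (Prod.mk ξ ⁻¹' S) ≠ 0 →
      ∃ l, Prod.mk ξ ⁻¹' sectionLayer ν S M l = Prod.mk ξ ⁻¹' S := by
  filter_upwards [hSM] with ξ hξ hξ₀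
  obtain ⟨l, hl⟩ := exists_mul_inv_two_pow_lt_le hξ₀ hξ hM
  exact ⟨l, preimage_sectionLayer_eq_self hl⟩

end SectionLayers

section RestrictedWeakType

variable {Ω X : Type*} [MeasurableSpace Ω] [MeasurableSpace X] {μ : Measure Ω} {ν : Measure X}
  [SFinite ν] {q r θ : ℝ} {M W : ℝ≥0∞}

lemma mixedNorm_indicator_one_le_tsum_sectionLayer (hq : 1 ≤ q) (hr : 0 < r) (hM : M ≠ ∞)
    {S : Set (Ω × X)} (hS : MeasurableSet S) (hSM : ∀ᵐ ξ ∂μ, ν (Prod.mk ξ ⁻¹' S) ≤ M) :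
    mixedNorm μ ν q r (S.indicator 1) ≤
      ∑' l, mixedNorm μ ν q r ((sectionLayer ν S M l).indicator 1) := by
  have h_meas (l : ℕ) : MeasurableSet (sectionLayer ν S M l) := measurableSet_sectionLayer hS l
  simp only [mixedNorm_indicator_one hr, hS, h_meas]
  refine (eLpNorm'_mono_enorm_ae (by linarith) ?_).trans
    (eLpNorm'_tsum_le hq fun l => (measurable_measure_prodMk_left (h_meas l)).pow_const _)
  filter_upwards [ae_exists_preimage_sectionLayer_eq_self hM hSM] with ξ hξ
  rcases eq_or_ne (ν (Prod.mk ξ ⁻¹' S)) 0 with h₀ | h₀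
  · simp [h₀, hr]
  · obtain ⟨l, hl⟩ := hξ h₀
    calc ν (Prod.mk ξ ⁻¹' S) ^ (1 / r)
        = ν (Prod.mk ξ ⁻¹' sectionLayer ν S M l) ^ (1 / r) := by rw [hl]
      _ ≤ ∑' l, ν (Prod.mk ξ ⁻¹' sectionLayer ν S M l) ^ (1 / r) := ENNReal.le_tsum l

lemma mixedNorm_indicator_sectionLayer_le (hq : 0 < q) (hr : 0 < r) {S : Set (Ω × X)}
    (hS : MeasurableSet S) (l : ℕ) :
    mixedNorm μ ν q r ((sectionLayer ν S M l).indicator 1) ≤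
      (2⁻¹ ^ l) ^ (1 / r) * (M ^ (1 / r) * μ Set.univ ^ (1 / q)) :=
  calc mixedNorm μ ν q r ((sectionLayer ν S M l).indicator 1)
      ≤ (M * 2⁻¹ ^ l) ^ (1 / r) * μ Set.univ ^ (1 / q) :=
        mixedNorm_indicator_one_le_of_section_le hq hr (measurableSet_sectionLayer hS l)
          fun ξ => measure_preimage_sectionLayer_le ξ l
    _ = (2⁻¹ ^ l) ^ (1 / r) * (M ^ (1 / r) * μ Set.univ ^ (1 / q)) := by
        rw [ENNReal.mul_rpow_of_nonneg _ _ (by positivity)]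
        ring

lemma mixedNorm_indicator_sectionLayer_le_mul_uniformSize (hq : 0 < q) (hqr : q ≤ r)
    (hM : M ≠ ∞) {S : Set (Ω × X)} (hS : MeasurableSet S) (l : ℕ) :
    mixedNorm μ ν q r ((sectionLayer ν S M l).indicator 1) ≤
      2 ^ (1 / q - 1 / r) * uniformSize μ ν q r (sectionLayer ν S M l) :=
  mixedNorm_indicator_one_le_mul_uniformSize hq hqr (measurableSet_sectionLayer hS l)
    (by simp) (by simp)
    (ne_top_of_le_ne_top (ENNReal.mul_ne_top hM (by simp)) (maxSection_sectionLayer_le l))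
    fun ξ => maxSection_sectionLayer_le_two_mul ξ l

/-- Interpolating the weak bound with the trivial one makes the layers decay geometrically. -/
lemma mixedNorm_indicator_one_le_of_uniformSize_le (hq : 1 ≤ q) (hqr : q ≤ r) (hM : M ≠ ∞)
    (hθ₀ : 0 ≤ θ) (hθ₁ : θ ≤ 1) {S : Set (Ω × X)} (hS : MeasurableSet S)
    (hSM : ∀ᵐ ξ ∂μ, ν (Prod.mk ξ ⁻¹' S) ≤ M)
    (hSW : ∀ F ⊆ S, MeasurableSet F → uniformSize μ ν q r F ≤ W) :
    mixedNorm μ ν q r (S.indicator 1) ≤ dyadicSum (θ / r) *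
      ((M ^ (1 / r) * μ Set.univ ^ (1 / q)) ^ θ * (2 ^ (1 / q - 1 / r) * W) ^ (1 - θ)) := by
  have hq₀ : 0 < q := by linarith
  have hr₀ : 0 < r := by linarith
  set U := M ^ (1 / r) * μ Set.univ ^ (1 / q)
  set F := sectionLayer ν S M
  have h_weak (l : ℕ) :
      mixedNorm μ ν q r ((F l).indicator 1) ≤ 2 ^ (1 / q - 1 / r) * W := by
    refine (mixedNorm_indicator_sectionLayer_le_mul_uniformSize hq₀ hqr hM hS l).trans ?_
    exact mul_le_mul_right (hSW _ (sectionLayer_subset l) (measurableSet_sectionLayer hS l)) _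
  calc mixedNorm μ ν q r (S.indicator 1)
      ≤ ∑' l, mixedNorm μ ν q r ((F l).indicator 1) :=
        mixedNorm_indicator_one_le_tsum_sectionLayer hq hr₀ hM hS hSM
    _ ≤ ∑' l, ((2⁻¹ ^ l) ^ (1 / r) * U) ^ θ * (2 ^ (1 / q - 1 / r) * W) ^ (1 - θ) := by
        gcongr with l
        exact le_rpow_mul_rpow_one_sub hθ₀ hθ₁
          (mixedNorm_indicator_sectionLayer_le hq₀ hr₀ hS l) (h_weak l)
    _ = dyadicSum (θ / r) * (U ^ θ * (2 ^ (1 / q - 1 / r) * W) ^ (1 - θ)) := by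
        simp only [ENNReal.mul_rpow_of_nonneg _ U hθ₀, ← ENNReal.rpow_mul, one_div_mul_eq_div,
          mul_assoc, ENNReal.tsum_mul_right, dyadicSum]

lemma le_tsum_inv_two_pow_mul_indicator {α : Type*} {T : α → ℝ≥0∞} (hT : ∀ z, T z ≤ 1) (z : α) :
    T z ≤ ∑' i : ℕ, 2⁻¹ ^ i * {z | 2⁻¹ ^ (i + 1) ≤ T z}.indicator 1 z := by
  rcases eq_or_ne (T z) 0 with h₀ | h₀
  · simp [h₀]
  · obtain ⟨i, hi, hi'⟩ := exists_mul_inv_two_pow_lt_le h₀ (hT z) one_ne_top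
    rw [one_mul] at hi hi'
    calc T z ≤ 2⁻¹ ^ i * {z | 2⁻¹ ^ (i + 1) ≤ T z}.indicator 1 z := by
          simpa [Set.indicator_apply, hi.le] using hi'
      _ ≤ ∑' i : ℕ, 2⁻¹ ^ i * {z | 2⁻¹ ^ (i + 1) ≤ T z}.indicator 1 z := ENNReal.le_tsum i

lemma mixedNorm_indicator_superlevel_le (hq : 1 ≤ q) (hqr : q ≤ r) (hM : M ≠ ∞)
    (hθ₀ : 0 ≤ θ) (hθ₁ : θ ≤ 1) {T : Ω × X → ℝ≥0∞} (hT : Measurable T)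
    (hTM : ∀ᵐ ξ ∂μ, ν {x | T (ξ, x) ≠ 0} ≤ M)
    (hTW : ∀ a : ℝ≥0∞, a ≠ 0 → a ≤ 1 → ∀ F, MeasurableSet F → (∀ w ∈ F, a ≤ T w) →
      a * uniformSize μ ν q r F ≤ W) (i : ℕ) :
    mixedNorm μ ν q r ({w | 2⁻¹ ^ (i + 1) ≤ T w}.indicator 1) ≤ dyadicSum (θ / r) *
      ((M ^ (1 / r) * μ Set.univ ^ (1 / q)) ^ θ *
        (2 ^ (1 / q - 1 / r) * (2 ^ (i + 1) * W)) ^ (1 - θ)) := by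
  refine mixedNorm_indicator_one_le_of_uniformSize_le hq hqr hM hθ₀ hθ₁
    (measurableSet_le measurable_const hT) ?_ fun F hFT hF => ?_
  · filter_upwards [hTM] with ξ hξ
    refine (measure_mono fun x hx => ?_).trans hξ
    exact ((ENNReal.pow_pos (by simp) (i + 1)).trans_le hx).ne'
  · calc uniformSize μ ν q r F
        = 2 ^ (i + 1) * (2⁻¹ ^ (i + 1) * uniformSize μ ν q r F) := by
          rw [← mul_assoc, two_pow_mul_inv_two_pow, one_mul]
      _ ≤ 2 ^ (i + 1) * W := by
          gcongr
          exact hTW _ (by simp) (pow_le_one₀ zero_le (by simp)) F hF fun w hw => hFT hw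

theorem mixedNorm_le_of_mul_uniformSize_le (hq : 1 ≤ q) (hqr : q ≤ r) (hM : M ≠ ∞)
    (hθ₀ : 0 ≤ θ) (hθ₁ : θ ≤ 1) {T : Ω × X → ℝ≥0∞} (hT : Measurable T) (hT₁ : ∀ w, T w ≤ 1)
    (hTM : ∀ᵐ ξ ∂μ, ν {x | T (ξ, x) ≠ 0} ≤ M)
    (hTW : ∀ a : ℝ≥0∞, a ≠ 0 → a ≤ 1 → ∀ F, MeasurableSet F → (∀ w ∈ F, a ≤ T w) →
      a * uniformSize μ ν q r F ≤ W) :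
    mixedNorm μ ν q r T ≤ dyadicSum θ * dyadicSum (θ / r) *
      ((M ^ (1 / r) * μ Set.univ ^ (1 / q)) ^ θ * (2 ^ (1 / q - 1 / r) * (2 * W)) ^ (1 - θ)) := by
  have hθ₁' : 0 ≤ 1 - θ := by linarith
  set U := M ^ (1 / r) * μ Set.univ ^ (1 / q)
  have h_loss (i : ℕ) : 2⁻¹ ^ i * ((2 : ℝ≥0∞) ^ i) ^ (1 - θ) = (2⁻¹ ^ i) ^ θ := by
    rw [← mul_inv_rpow_one_sub (a := 2⁻¹ ^ i) (by simp) (by simp), ← ENNReal.inv_pow, inv_inv]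
  calc mixedNorm μ ν q r T
      ≤ ∑' i : ℕ, 2⁻¹ ^ i * mixedNorm μ ν q r ({w | 2⁻¹ ^ (i + 1) ≤ T w}.indicator 1) :=
        (isCountablySublinear_mixedNorm hq (hq.trans hqr)).le_tsum_const_mul
          (fun i => measurable_one.indicator (measurableSet_le measurable_const hT))
          (le_tsum_inv_two_pow_mul_indicator hT₁)
    _ ≤ ∑' i : ℕ, 2⁻¹ ^ i * (dyadicSum (θ / r) *
          (U ^ θ * (2 ^ (1 / q - 1 / r) * (2 ^ (i + 1) * W)) ^ (1 - θ))) := by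
        gcongr with i
        exact mixedNorm_indicator_superlevel_le hq hqr hM hθ₀ hθ₁ hT hTM hTW i
    _ = ∑' i : ℕ, (2⁻¹ ^ i) ^ θ * (dyadicSum (θ / r) *
          (U ^ θ * (2 ^ (1 / q - 1 / r) * (2 * W)) ^ (1 - θ))) := by
        congr with i
        rw [pow_succ, mul_assoc (2 ^ i), mul_left_comm _ (2 ^ i),
          ENNReal.mul_rpow_of_nonneg _ _ hθ₁', ← h_loss]
        ring
    _ = dyadicSum θ * dyadicSum (θ / r) *
          (U ^ θ * (2 ^ (1 / q - 1 / r) * (2 * W)) ^ (1 - θ)) := by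
        rw [ENNReal.tsum_mul_right, ← dyadicSum, mul_assoc]

end RestrictedWeakType

section XrayTransform

variable {n : ℕ} {f g : Euc n × ℝ → ℝ≥0∞}

lemma measurable_xrayT (hf : Measurable f) : Measurable fun w : Euc n × Euc n => xrayT f w.1 w.2 :=
  Measurable.lintegral_prod_right' (f := fun u : (Euc n × Euc n) × ℝ =>
    f (u.1.2 + u.2 • u.1.1, u.2)) (hf.comp (by fun_prop))

lemma xrayT_mono (hfg : ∀ z, f z ≤ g z) (ξ x : Euc n) : xrayT f ξ x ≤ xrayT g ξ x :=
  lintegral_mono fun _ => hfg _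

lemma xrayT_tsum {f : ℕ → Euc n × ℝ → ℝ≥0∞} (hf : ∀ k, Measurable (f k)) (ξ x : Euc n) :
    xrayT (fun z => ∑' k, f k z) ξ x = ∑' k, xrayT (f k) ξ x :=
  lintegral_tsum fun k => ((hf k).comp (by fun_prop)).aemeasurable

lemma xrayT_const_mul (a : ℝ≥0∞) (hf : Measurable f) (ξ x : Euc n) :
    xrayT (fun z => a * f z) ξ x = a * xrayT f ξ x :=
  lintegral_const_mul a (hf.comp (by fun_prop))

lemma xrayT_indicator_one_le_one (E : Set (Euc n × ℝ)) (ξ x : Euc n) :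
    xrayT (E.indicator 1) ξ x ≤ 1 :=
  calc xrayT (E.indicator 1) ξ x ≤ xrayT 1 ξ x := xrayT_mono (Set.indicator_le_self E 1) ξ x
    _ = 1 := by simp [xrayT]

lemma norm_le_add_norm_of_xrayT_ne_zero {R : ℝ} (hf : ∀ z, R < ‖z.1‖ → f z = 0) {ξ x : Euc n}
    (h : xrayT f ξ x ≠ 0) : ‖x‖ ≤ R + ‖ξ‖ := by
  by_contra! hx
  refine h (setLIntegral_eq_zero measurableSet_Ioc fun t ht => hf _ ?_)
  have h_tξ : ‖t • ξ‖ ≤ ‖ξ‖ := by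
    rw [norm_smul, Real.norm_of_nonneg ht.1.le]
    exact mul_le_of_le_one_left (norm_nonneg ξ) ht.2
  have h_tri : ‖x‖ ≤ ‖x + t • ξ‖ + ‖t • ξ‖ := by simpa using norm_sub_le (x + t • ξ) (t • ξ)
  linarith

lemma volume_xrayT_ne_zero_le {R C : ℝ} (hf : ∀ z, R < ‖z.1‖ → f z = 0) {ξ : Euc n}
    (hξ : ‖ξ‖ ≤ C) :
    volume {x | xrayT f ξ x ≠ 0} ≤ volume (Metric.closedBall (0 : Euc n) (R + C)) :=
  measure_mono fun _ hx => mem_closedBall_zero_iff.2 <|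
    (norm_le_add_norm_of_xrayT_ne_zero hf hx).trans (by gcongr)

lemma kakeyaMixedNorm_eq_mixedNorm (q r C : ℝ) (f : Euc n × ℝ → ℝ≥0∞) :
    kakeyaMixedNorm q r C f =
      mixedNorm (volume.restrict (Metric.ball 0 C)) volume q r fun w => xrayT f w.1 w.2 := by
  simp only [kakeyaMixedNorm, mixedNorm, eLpNorm', enorm_eq_self, ← ENNReal.rpow_mul,
    one_div_mul_eq_div]

lemma isCountablySublinear_kakeyaMixedNorm {q r : ℝ} (hq : 1 ≤ q) (hr : 1 ≤ r) (C : ℝ) :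
    IsCountablySublinear (kakeyaMixedNorm (n := n) q r C) := by
  have h_norm : IsCountablySublinear
      (mixedNorm ((volume : Measure (Euc n)).restrict (Metric.ball 0 C)) (volume : Measure (Euc n))
        q r) := isCountablySublinear_mixedNorm hq hr
  refine ⟨fun hfg => ?_, fun hf => ?_, fun a f hf => ?_⟩ <;>
    simp only [kakeyaMixedNorm_eq_mixedNorm]
  · exact h_norm.mono fun w => xrayT_mono hfg w.1 w.2
  · simp only [xrayT_tsum hf]
    exact h_norm.tsum_le fun k => measurable_xrayT (hf k)
  · simp only [xrayT_const_mul a hf]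
    exact h_norm.const_mul_le a (measurable_xrayT hf)

lemma isCompact_Qcube (n : ℕ) : IsCompact (Qcube n) := by
  have h_eq : Qcube n = ((EuclideanSpace.equiv (Fin n) ℝ).toHomeomorph ⁻¹'
      Set.univ.pi fun _ => Set.Icc (-(1 : ℝ) / 2) (1 / 2)) ×ˢ Set.Icc (0 : ℝ) 1 := by
    ext z
    simp only [Qcube, Set.mem_ofPred_eq, Set.mem_prod, Set.mem_preimage, Set.mem_univ_pi]
    rfl
  rw [h_eq]
  exact ((Homeomorph.isCompact_preimage _).2 (isCompact_univ_pi fun _ => isCompact_Icc)).prod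
    isCompact_Icc

end XrayTransform

section KakeyaWeakType

variable {n : ℕ} {Q : Set (Euc n × ℝ)} {C p q r c : ℝ}

/-- The restricted weak-type estimate with constant `c` for subsets of `Q`. -/
def RestrictedWeakBound (Q : Set (Euc n × ℝ)) (C p q r c : ℝ) : Prop :=
  ∀ E : Set (Euc n × ℝ), E ⊆ Q → MeasurableSet E → ∀ lam : ℝ, lam ∈ Set.Ioc (0 : ℝ) 1 →
    ∀ F : Set (Euc n × Euc n), F ⊆ Metric.ball 0 C ×ˢ Set.univ → MeasurableSet F →
      (∀ w ∈ F, ENNReal.ofReal lam ≤ xrayT (E.indicator 1) w.1 w.2) →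
      ENNReal.ofReal (c * lam) * volume F ^ (1 / q) * mF F ^ (1 / r - 1 / q) ≤ volume E ^ (1 / p)

/-- Cutting `F` down to the ball leaves its restricted measure unchanged and decreases `mF`, whose
exponent is nonpositive. -/
lemma uniformSize_restrict_ball_le (hq : 0 < q) (hqr : q ≤ r) (F : Set (Euc n × Euc n)) :
    uniformSize (volume.restrict (Metric.ball 0 C)) volume q r F ≤
      volume (F ∩ Metric.ball 0 C ×ˢ Set.univ) ^ (1 / q) *
        mF (F ∩ Metric.ball 0 C ×ˢ Set.univ) ^ (1 / r - 1 / q) := by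
  have h_meas : (volume.restrict (Metric.ball (0 : Euc n) C)).prod volume F =
      volume (F ∩ Metric.ball 0 C ×ˢ Set.univ) := by
    rw [Measure.restrict_prod_eq_prod_univ,
      Measure.restrict_apply' (measurableSet_ball.prod MeasurableSet.univ), Measure.volume_eq_prod]
  have h_max : mF (F ∩ Metric.ball 0 C ×ˢ Set.univ) ≤ maxSection volume F :=
    iSup_mono fun ξ => measure_mono fun x hx => hx.1
  rw [uniformSize, h_meas]
  gcongr _ * ?_
  exact ennreal_rpow_le_rpow_of_nonpos (sub_nonpos.2 (one_div_le_one_div_of_le hq hqr)) h_max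

lemma RestrictedWeakBound.mul_uniformSize_le (h : RestrictedWeakBound Q C p q r c) (hq : 0 < q)
    (hqr : q ≤ r) (hc : 0 < c) {E : Set (Euc n × ℝ)} (hEQ : E ⊆ Q) (hE : MeasurableSet E)
    {a : ℝ≥0∞} (ha₀ : a ≠ 0) (ha₁ : a ≤ 1) {F : Set (Euc n × Euc n)} (hF : MeasurableSet F)
    (haF : ∀ w ∈ F, a ≤ xrayT (E.indicator 1) w.1 w.2) :
    a * uniformSize (volume.restrict (Metric.ball 0 C)) volume q r F ≤
      (ENNReal.ofReal c)⁻¹ * volume E ^ (1 / p) := by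
  have ha : a ≠ ∞ := ne_top_of_le_ne_top one_ne_top ha₁
  set F' := F ∩ Metric.ball 0 C ×ˢ Set.univ
  have hF' : MeasurableSet F' := hF.inter (measurableSet_ball.prod MeasurableSet.univ)
  have h_weak : ENNReal.ofReal (c * a.toReal) * volume F' ^ (1 / q) * mF F' ^ (1 / r - 1 / q) ≤
      volume E ^ (1 / p) :=
    h E hEQ hE a.toReal ⟨ENNReal.toReal_pos ha₀ ha, ENNReal.toReal_mono one_ne_top ha₁⟩ F'
      Set.inter_subset_right hF' fun w hw => (ENNReal.ofReal_toReal ha).trans_le (haF w hw.1)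
  rw [ENNReal.ofReal_mul hc.le, ENNReal.ofReal_toReal ha, mul_assoc, mul_assoc] at h_weak
  have hc' : ENNReal.ofReal c ≠ 0 := by simpa using hc
  rw [mul_comm _⁻¹, ← div_eq_mul_inv, ENNReal.le_div_iff_mul_le (Or.inl hc') (by simp)]
  calc a * uniformSize (volume.restrict (Metric.ball 0 C)) volume q r F * ENNReal.ofReal c
      ≤ a * (volume F' ^ (1 / q) * mF F' ^ (1 / r - 1 / q)) * ENNReal.ofReal c := by
        gcongr
        exact uniformSize_restrict_ball_le hq hqr F
    _ ≤ volume E ^ (1 / p) := by rwa [mul_comm]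

theorem RestrictedWeakBound.exists_kakeyaMixedNorm_indicator_le
    (h : RestrictedWeakBound Q C p q r c) (hQ : Bornology.IsBounded Q) (hq : 1 ≤ q) (hqr : q ≤ r)
    (hc : 0 < c) {θ : ℝ} (hθ₀ : 0 < θ) (hθ₁ : θ ≤ 1) :
    ∃ A ≠ ∞, ∀ E ⊆ Q, MeasurableSet E →
      kakeyaMixedNorm q r C (E.indicator 1) ≤ A * volume E ^ ((1 - θ) / p) := by
  have hq₀ : 0 < q := by linarith
  have hr₀ : 0 < r := by linarith
  have hθ₁' : 0 ≤ 1 - θ := by linarith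
  obtain ⟨R, hR⟩ := hQ.exists_norm_le
  set μ := (volume : Measure (Euc n)).restrict (Metric.ball 0 C)
  set M := volume (Metric.closedBall (0 : Euc n) (R + C))
  set U := M ^ (1 / r) * μ Set.univ ^ (1 / q)
  have hM : M ≠ ∞ := measure_closedBall_lt_top.ne
  have hU : U ≠ ∞ := ENNReal.mul_ne_top (ENNReal.rpow_ne_top_of_nonneg (by positivity) hM)
    (ENNReal.rpow_ne_top_of_nonneg (by positivity) (by simp [μ, measure_ball_lt_top.ne]))
  set V := 2 ^ (1 / q - 1 / r) * (2 * (ENNReal.ofReal c)⁻¹)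
  have hV : V ≠ ∞ := by simp [V, hc, ENNReal.mul_eq_top]
  refine ⟨dyadicSum θ * dyadicSum (θ / r) * (U ^ θ * V ^ (1 - θ)), ?_, fun E hEQ hE => ?_⟩
  · exact ENNReal.mul_ne_top
      (ENNReal.mul_ne_top (dyadicSum_ne_top hθ₀) (dyadicSum_ne_top (by positivity)))
      (ENNReal.mul_ne_top (ENNReal.rpow_ne_top_of_nonneg hθ₀.le hU)
        (ENNReal.rpow_ne_top_of_nonneg hθ₁' hV))
  have h_support : ∀ᵐ ξ ∂μ, volume {x | xrayT (E.indicator 1) ξ x ≠ 0} ≤ M := by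
    filter_upwards [ae_restrict_mem measurableSet_ball] with ξ hξ
    refine volume_xrayT_ne_zero_le (fun z hz => Set.indicator_of_notMem (fun hzE => ?_) _)
      (mem_ball_zero_iff.1 hξ).le
    exact hz.not_ge ((norm_fst_le z).trans (hR z (hEQ hzE)))
  calc kakeyaMixedNorm q r C (E.indicator 1)
      ≤ dyadicSum θ * dyadicSum (θ / r) * (U ^ θ *
          (2 ^ (1 / q - 1 / r) * (2 * ((ENNReal.ofReal c)⁻¹ * volume E ^ (1 / p)))) ^ (1 - θ)) := by
        rw [kakeyaMixedNorm_eq_mixedNorm]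
        exact mixedNorm_le_of_mul_uniformSize_le hq hqr hM hθ₀.le hθ₁
          (measurable_xrayT (measurable_one.indicator hE))
          (fun w => xrayT_indicator_one_le_one E w.1 w.2) h_support
          fun a ha₀ ha₁ F hF haF => h.mul_uniformSize_le hq₀ hqr hc hEQ hE ha₀ ha₁ hF haF
    _ = dyadicSum θ * dyadicSum (θ / r) * (U ^ θ * V ^ (1 - θ)) * volume E ^ ((1 - θ) / p) := by
        have h_const : 2 ^ (1 / q - 1 / r) * (2 * ((ENNReal.ofReal c)⁻¹ * volume E ^ (1 / p))) =
            V * volume E ^ (1 / p) := by ring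
        rw [h_const, ENNReal.mul_rpow_of_nonneg _ _ hθ₁', ← ENNReal.rpow_mul, one_div_mul_eq_div]
        ring

end KakeyaWeakType

theorem statement9_general {n : ℕ} {Q : Set (Euc n × ℝ)} {C p q r c : ℝ} (hQ : MeasurableSet Q)
    (hQ_bdd : Bornology.IsBounded Q) (hp : 0 < p) (hq : 1 ≤ q) (hqr : q ≤ r) (hc : 0 < c)
    (hweak : RestrictedWeakBound Q C p q r c) {ε : ℝ} (hε : 0 < ε) :
    ∃ A : ℝ, 0 < A ∧ ∀ f : Euc n × ℝ → ℝ≥0∞, Measurable f → (∀ z, z ∉ Q → f z = 0) →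
      kakeyaMixedNorm q r C f ≤ ENNReal.ofReal A * _root_.lpNorm (p + ε) f := by
  have hθ₀ : 0 < ε / (2 * (p + ε)) := by positivity
  have hθ₁ : ε / (2 * (p + ε)) ≤ 1 := (div_le_one (by positivity)).2 (by linarith)
  have h_gain : 1 < (p + ε) * ((1 - ε / (2 * (p + ε))) / p) := by
    have h_eq : (p + ε) * ((1 - ε / (2 * (p + ε))) / p) = 1 + ε / (2 * p) := by
      field_simp
      ring
    rw [h_eq]
    exact lt_add_of_pos_right 1 (by positivity)
  obtain ⟨A, hA_top, hA⟩ :=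
    hweak.exists_kakeyaMixedNorm_indicator_le hQ_bdd hq hqr hc hθ₀ hθ₁
  obtain ⟨B, hB, hBf⟩ :=
    (isCountablySublinear_kakeyaMixedNorm hq (hq.trans hqr) C).exists_le_mul_eLpNorm' hQ
      hQ_bdd.measure_lt_top.ne (by positivity) h_gain hA_top hA
  exact ⟨B, hB, hBf⟩

/-- Reduction to weak estimates: if the restricted weak-type estimate
`ℒ^d(E)^{1/p} ≳ λ ℒ^{2(d-1)}(F)^{1/q} m(F)^{1/r - 1/q}` holds for all `E ⊆ Q`,
then `‖T[f]‖_{L^q(L^r),K} ≲ ‖f‖_{L^{p+ε}}` for `f` supported on `Q`. -/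
theorem statement9 (d : ℕ) (hd : 2 ≤ d) (C : ℝ) (hC : 0 < C) (p q r : ℝ)
    (hp : 1 ≤ p) (hpq : p ≤ q) (hqr : q < r)
    (c : ℝ) (hc : 0 < c)
    (hweak : ∀ E : Set (Euc (d - 1) × ℝ), E ⊆ Qcube (d - 1) → MeasurableSet E →
      ∀ lam : ℝ, lam ∈ Set.Ioc (0:ℝ) 1 →
      ∀ F : Set (Euc (d - 1) × Euc (d - 1)),
        F ⊆ (Metric.ball (0 : Euc (d - 1)) C) ×ˢ (Set.univ : Set (Euc (d - 1))) →
        MeasurableSet F →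
        (∀ w ∈ F, ENNReal.ofReal lam ≤ xrayT (E.indicator fun _ => (1:ℝ≥0∞)) w.1 w.2) →
        ENNReal.ofReal (c * lam) * (volume F) ^ (1/q) * (mF F) ^ (1/r - 1/q)
          ≤ (volume E) ^ (1/p)) :
    ∀ ε : ℝ, 0 < ε → ∃ A : ℝ, 0 < A ∧
      ∀ f : Euc (d - 1) × ℝ → ℝ≥0∞, Measurable f →
        (∀ z, z ∉ Qcube (d - 1) → f z = 0) →
        kakeyaMixedNorm q r C f ≤ ENNReal.ofReal A * lpNorm (p + ε) f := by
  have hQ := isCompact_Qcube (d - 1)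
  exact fun _ => statement9_general hQ.measurableSet hQ.isBounded (by linarith) (by linarith)
    hqr.le hc hweak

end
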